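/- Fix K ≥ 1 and 1 ≤ i < n. Let Inc_i denote the multiset {R(j,i) : 1 ≤ j ≤ i} of incomplete-window scores ending at frame i, and let Win_i denote the multiset {F(s,e) : 1 ≤ s < e ≤ i} of structured scores of all temporal windows ending at or before frame i. Then topK(K, Win_{i+1}) = topK(K, topK(K, Win_i) + map (x ↦ x + f^e(i+1)) (topK(K, Inc_i))); that is, the K best window scores ending at or before frame i+1 are obtained by completing each of the K best incomplete windows ending at frame i with the end score f^e(i+1), merging with the previous K best complete window scores, and keeping the K largest values. (Lemma 2 of the paper.) -/

import Mathlib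

/-- `topK K S` is the multiset of the `min(K, |S|)` largest elements of `S`:
sort `S` in ascending order and keep the last `min(K, |S|)` elements. -/
noncomputable def topK (K : ℕ) (S : Multiset ℝ) : Multiset ℝ :=
  ((S.sort (· ≤ ·)).drop (Multiset.card S - K) : List ℝ)

/-- Incomplete-window score: `R fs fm j i = f^s(j) + ∑_{q=j+1}^{i} f^m(q)`. -/
def R (fs fm : ℕ → ℝ) (j i : ℕ) : ℝ :=
  fs j + ∑ q ∈ Finset.Icc (j + 1) i, fm q

/-- Structured score of the temporal window `(s, e)`:
`F(s,e) = f^s(s) + ∑_{t=s+1}^{e-1} f^m(t) + f^e(e)`. -/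
def Fscore (fs fm fe : ℕ → ℝ) (s e : ℕ) : ℝ :=
  fs s + ∑ t ∈ Finset.Icc (s + 1) (e - 1), fm t + fe e

/-- `Inc fs fm i` is the multiset `{R(j,i) : 1 ≤ j ≤ i}` of scores of the
incomplete windows ending at frame `i`. -/
def Inc (fs fm : ℕ → ℝ) (i : ℕ) : Multiset ℝ :=
  (Finset.Icc 1 i).val.map (fun j => R fs fm j i)

/-- `Win fs fm fe i` is the multiset `{F(s,e) : 1 ≤ s < e ≤ i}` of structured
scores of all temporal windows ending at or before frame `i`. -/
def Win (fs fm fe : ℕ → ℝ) (i : ℕ) : Multiset ℝ :=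
  (((Finset.Icc 1 i) ×ˢ (Finset.Icc 1 i)).filter (fun p => p.1 < p.2)).val.map
    (fun p => Fscore fs fm fe p.1 p.2)

theorem topK_unique (K : ℕ) (C T : Multiset ℝ) (hcard : Multiset.card T = min K (Multiset.card (C + T)))
    (h : ∀ x ∈ C, ∀ y ∈ T, x ≤ y) : topK K (C + T) = T := by
  have hs : (C + T).sort (· ≤ ·) = C.sort (· ≤ ·) ++ T.sort (· ≤ ·) := by
    apply List.Perm.eq_of_pairwise' (r := (· ≤ ·))
    · exact Multiset.pairwise_sort _ _
    · rw [List.pairwise_append]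
      refine ⟨Multiset.pairwise_sort _ _, Multiset.pairwise_sort _ _, ?_⟩
      intro a ha b hb
      exact h a (by simpa using ha) b (by simpa using hb)
    · rw [← Multiset.coe_eq_coe, ← Multiset.coe_add]
      simp only [Multiset.sort_eq]
  have hl : Multiset.card (C + T) - K = (C.sort (· ≤ ·)).length := by
    rw [Multiset.length_sort]
    rw [Multiset.card_add] at *
    omega
  unfold topK
  rw [hs, hl, List.drop_left, Multiset.sort_eq]

theorem topK_spec (K : ℕ) (S : Multiset ℝ) : ∃ C, S = C + topK K S ∧
    Multiset.card (topK K S) = min K (Multiset.card S) ∧ ∀ x ∈ C, ∀ y ∈ topK K S, x ≤ y := by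
  refine ⟨((S.sort (· ≤ ·)).take (Multiset.card S - K) : List ℝ), ?_, ?_, ?_⟩
  · unfold topK
    rw [Multiset.coe_add, List.take_append_drop, Multiset.sort_eq]
  · unfold topK
    rw [Multiset.coe_card, List.length_drop, Multiset.length_sort]
    omega
  · have hp := Multiset.pairwise_sort S (· ≤ ·)
    rw [← List.take_append_drop (Multiset.card S - K) (S.sort (· ≤ ·)), List.pairwise_append] at hp
    intro x hx y hy
    exact hp.2.2 x hx y hy

theorem topK_map (K : ℕ) (S : Multiset ℝ) (c : ℝ) :
    topK K (S.map (fun x => x + c)) = (topK K S).map (fun x => x + c) := by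
  obtain ⟨C, h1, h2, h3⟩ := topK_spec K S
  generalize topK K S = T at *
  subst h1
  rw [Multiset.map_add]
  apply topK_unique
  · simpa using h2
  · intro x hx y hy
    obtain ⟨a, ha, rfl⟩ := Multiset.mem_map.1 hx
    obtain ⟨b, hb, rfl⟩ := Multiset.mem_map.1 hy
    have := h3 a ha b hb
    linarith

theorem topK_aux (K : ℕ) (C T U E V : Multiset ℝ)
    (hT : Multiset.card T = min K (Multiset.card (C + T))) (hCT : ∀ x ∈ C, ∀ y ∈ T, x ≤ y)
    (h : T + U = E + V) (hV : Multiset.card V ≤ K) (hEV : ∀ x ∈ E, ∀ y ∈ V, x ≤ y) :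
    ∀ x ∈ C, ∀ y ∈ V, x ≤ y := by
  intro c hc v hv
  by_contra hlt
  push Not at hlt
  have hCpos : 0 < Multiset.card C := Multiset.card_pos_iff_exists_mem.2 ⟨c, hc⟩
  rw [Multiset.card_add] at hT
  have hTf : T.filter (fun x => v < x) = T :=
    Multiset.filter_eq_self.2 fun t ht => hlt.trans_le (hCT c hc t ht)
  have hEf : E.filter (fun x => v < x) = 0 :=
    Multiset.filter_eq_nil.2 fun e he => not_lt.2 (hEV e he v hv)
  have hf := congrArg (fun M => Multiset.card (M.filter (fun x => v < x))) h
  simp only [Multiset.filter_add, Multiset.card_add, hTf, hEf, Multiset.card_zero] at hf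
  have hlt2 : Multiset.card (V.filter (fun x => v < x)) < Multiset.card V := by
    apply Multiset.card_lt_card
    refine lt_of_le_of_ne (Multiset.filter_le _ _) fun he => ?_
    exact lt_irrefl v (Multiset.filter_eq_self.1 he v hv)
  omega

theorem topK_add (K : ℕ) (A B : Multiset ℝ) :
    topK K (A + B) = topK K (topK K A + topK K B) := by
  obtain ⟨C, h1, h2, h3⟩ := topK_spec K A
  obtain ⟨D, g1, g2, g3⟩ := topK_spec K B
  obtain ⟨E, k1, k2, k3⟩ := topK_spec K (topK K A + topK K B)
  generalize topK K (topK K A + topK K B) = V at *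
  generalize topK K A = T at *
  generalize topK K B = U at *
  subst h1 g1
  have hV : Multiset.card V ≤ K := by omega
  have e : C + T + (D + U) = (C + D + E) + V := by
    rw [add_assoc (C + D), ← k1]; abel
  have hc := topK_aux K C T U E V h2 h3 k1 hV k3
  have hd := topK_aux K D U T E V g2 g3 (by rw [add_comm, k1]) hV k3
  rw [e]
  apply topK_unique
  · rw [← e]
    simp only [Multiset.card_add] at *
    omega
  · intro x hx y hy
    rcases Multiset.mem_add.1 hx with hx | hx
    · rcases Multiset.mem_add.1 hx with hx | hx
      · exact hc x hx y hy
      · exact hd x hx y hy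
    · exact k3 x hx y hy

theorem Win_succ (fs fm fe : ℕ → ℝ) (i : ℕ) :
    Win fs fm fe (i + 1) = Win fs fm fe i + (Inc fs fm i).map (fun x => x + fe (i + 1)) := by
  have hdisj : Disjoint (((Finset.Icc 1 i) ×ˢ (Finset.Icc 1 i)).filter (fun p => p.1 < p.2))
      ((Finset.Icc 1 i).map ⟨fun j => (j, i + 1), fun a b h => (Prod.mk.inj h).1⟩) := by
    rw [Finset.disjoint_left]
    rintro ⟨a, b⟩ h1 h2
    simp only [Finset.mem_filter, Finset.mem_product, Finset.mem_Icc] at h1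
    obtain ⟨j, hj, hj2⟩ := Finset.mem_map.1 h2
    have hb : i + 1 = b := (Prod.mk.inj hj2).2
    omega
  have hu : ((Finset.Icc 1 (i + 1)) ×ˢ (Finset.Icc 1 (i + 1))).filter (fun p => p.1 < p.2) =
      Finset.disjUnion _ _ hdisj := by
    ext ⟨a, b⟩
    simp only [Finset.mem_disjUnion, Finset.mem_filter, Finset.mem_product, Finset.mem_Icc,
      Finset.mem_map]
    constructor
    · intro h
      by_cases hb : b = i + 1
      · exact Or.inr ⟨a, by omega, Prod.ext rfl hb.symm⟩
      · left; omega
    · rintro (h | ⟨j, h1, h2⟩)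
      · omega
      · have ha : j = a := (Prod.mk.inj h2).1
        have hb : i + 1 = b := (Prod.mk.inj h2).2
        omega
  unfold Win Inc
  rw [hu, Finset.disjUnion_val, Multiset.map_add, Finset.map_val, Multiset.map_map,
    Multiset.map_map]
  rfl

/-- Lemma 2: the K best window scores ending at or before frame `i+1` are
obtained by completing each of the K best incomplete windows ending at frame
`i` with the end score `f^e(i+1)`, merging with the previous K best complete
window scores, and keeping the K largest values. -/
theorem topK_win_step (n K i : ℕ) (hK : 1 ≤ K) (hi : 1 ≤ i) (hin : i < n)
    (fs fm fe : ℕ → ℝ) :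
    topK K (Win fs fm fe (i + 1)) =
      topK K (topK K (Win fs fm fe i) +
        (topK K (Inc fs fm i)).map (fun x => x + fe (i + 1))) := by
  rw [Win_succ, topK_add, topK_map]
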